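/- (Continuous variant of the Dulmage–Mendelsohn theorem) Let X and Y be compact metric spaces, μ_X ≥ μ'_X finite Borel measures on X and μ_Y ≥ μ'_Y finite Borel measures on Y, and E ⊂ X×Y a closed set. Suppose that for all Borel A ⊂ X and B ⊂ Y one has μ_Y(A^E) ≥ μ'_X(A) and μ_X(B^E) ≥ μ'_Y(B), where A^E = {y : ∃x∈A, (x,y)∈E} and B^E = {x : ∃y∈B, (x,y)∈E}. Then there exist measures μ̃_X, μ̃_Y with μ'_X ≤ μ̃_X ≤ μ_X, μ'_Y ≤ μ̃_Y ≤ μ_Y, and a coupling γ of μ̃_X and μ̃_Y with supp(γ) ⊂ E. -/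

import Mathlib

open MeasureTheory Metric Set

lemma dm_integrable {X : Type*} [MetricSpace X] [CompactSpace X] [MeasurableSpace X] [BorelSpace X]
    (μ : Measure X) [IsFiniteMeasure μ] (f : X → ℝ) (hf : Continuous f) : Integrable f μ :=
  hf.integrable_of_hasCompactSupport (HasCompactSupport.of_compactSpace f)

/-- Comparison of measures by comparison of integrals of nonnegative continuous functions. -/
lemma dm_measure_le {X : Type*} [MetricSpace X] [CompactSpace X] [MeasurableSpace X] [BorelSpace X]
    (μ ν : Measure X) [IsFiniteMeasure μ] [IsFiniteMeasure ν]
    (h : ∀ f : C(X, ℝ), 0 ≤ f → ∫ x, f x ∂μ ≤ ∫ x, f x ∂ν) : μ ≤ ν := by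
  have hF : ∀ F : Set X, IsClosed F → μ F ≤ ν F := by
    intro F hF
    have hpos : ∀ n : ℕ, (0 : ℝ) < 1 / ((n : ℝ) + 1) := fun n => Nat.one_div_pos_of_nat
    have h1 := tendsto_lintegral_thickenedIndicator_of_isClosed μ hF hpos
      tendsto_one_div_add_atTop_nhds_zero_nat
    have h2 := tendsto_lintegral_thickenedIndicator_of_isClosed ν hF hpos
      tendsto_one_div_add_atTop_nhds_zero_nat
    refine le_of_tendsto_of_tendsto' h1 h2 fun n => ?_
    have hc : Continuous fun x => ((thickenedIndicator (hpos n) F x : NNReal) : ℝ) :=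
      NNReal.continuous_coe.comp (thickenedIndicator (hpos n) F).continuous
    have := h ⟨_, hc⟩ (fun x => NNReal.coe_nonneg _)
    simp only [ContinuousMap.coe_mk] at this
    rw [lintegral_coe_eq_integral _ (dm_integrable μ _ hc),
      lintegral_coe_eq_integral _ (dm_integrable ν _ hc)]
    exact ENNReal.ofReal_le_ofReal this
  refine Measure.le_iff.2 fun s hs => ?_
  rw [hs.measure_eq_iSup_isClosed_of_ne_top (measure_ne_top μ s)]
  exact iSup_le fun K => iSup_le fun hK => iSup_le fun hc => (hF K hc).trans (measure_mono hK)

/-- Layer cake comparison. -/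
lemma dm_layer {X Y : Type*} [MetricSpace X] [CompactSpace X] [MeasurableSpace X] [BorelSpace X]
    [MetricSpace Y] [CompactSpace Y] [MeasurableSpace Y] [BorelSpace Y]
    (μ : Measure X) (ν : Measure Y) [IsFiniteMeasure μ] [IsFiniteMeasure ν]
    (E : X → Y → Prop)
    (hA : ∀ A : Set X, MeasurableSet A → μ A ≤ ν {y | ∃ x ∈ A, E x y})
    (f : X → ℝ) (g : Y → ℝ) (hf : Continuous f) (hg : Continuous g)
    (hf0 : ∀ x, 0 ≤ f x) (hg0 : ∀ y, 0 ≤ g y)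
    (h : ∀ x y, E x y → 0 < f x → f x ≤ g y) : ∫ x, f x ∂μ ≤ ∫ y, g y ∂ν := by
  rw [integral_eq_lintegral_of_nonneg_ae (.of_forall hf0) hf.aestronglyMeasurable,
    integral_eq_lintegral_of_nonneg_ae (.of_forall hg0) hg.aestronglyMeasurable]
  have hfin := (dm_integrable ν g hg).lintegral_lt_top
  refine ENNReal.toReal_mono hfin.ne ?_
  rw [lintegral_eq_lintegral_meas_le _ (.of_forall hf0) hf.aemeasurable,
    lintegral_eq_lintegral_meas_le _ (.of_forall hg0) hg.aemeasurable]
  refine setLIntegral_mono' measurableSet_Ioi fun t ht => ?_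
  refine (hA _ (measurableSet_le measurable_const hf.measurable)).trans (measure_mono ?_)
  rintro y ⟨x, hx, hxy⟩
  exact le_trans hx (h x y hxy (lt_of_lt_of_le ht hx))

lemma dm_mono {X : Type*} [MetricSpace X] [CompactSpace X] [MeasurableSpace X] [BorelSpace X]
    (μ' μ : Measure X) [IsFiniteMeasure μ] (h : μ' ≤ μ)
    (f : X → ℝ) (hf : Continuous f) (hf0 : ∀ x, 0 ≤ f x) : ∫ x, f x ∂μ' ≤ ∫ x, f x ∂μ :=
  integral_mono_measure h (.of_forall hf0) (dm_integrable μ f hf)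

/-- The dual inequality. -/
lemma dm_dual {X Y : Type*} [MetricSpace X] [CompactSpace X] [MeasurableSpace X] [BorelSpace X]
    [MetricSpace Y] [CompactSpace Y] [MeasurableSpace Y] [BorelSpace Y]
    (μX μX' : Measure X) (μY μY' : Measure Y)
    [IsFiniteMeasure μX] [IsFiniteMeasure μX'] [IsFiniteMeasure μY] [IsFiniteMeasure μY']
    (hX : μX' ≤ μX) (hY : μY' ≤ μY)
    (E : Set (X × Y))
    (hA : ∀ A : Set X, MeasurableSet A → μX' A ≤ μY {y | ∃ x ∈ A, (x, y) ∈ E})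
    (hB : ∀ B : Set Y, MeasurableSet B → μY' B ≤ μX {x | ∃ y ∈ B, (x, y) ∈ E})
    (f₁ f₂ : C(X, ℝ)) (g₁ g₂ : C(Y, ℝ)) (hf₁ : 0 ≤ f₁) (hf₂ : 0 ≤ f₂) (hg₁ : 0 ≤ g₁) (hg₂ : 0 ≤ g₂)
    (h : ∀ x y, (x, y) ∈ E → 0 ≤ f₁ x - f₂ x + (g₁ y - g₂ y)) :
    0 ≤ ∫ x, f₁ x ∂μX - ∫ x, f₂ x ∂μX' + (∫ y, g₁ y ∂μY - ∫ y, g₂ y ∂μY') := by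
  have k1 : ∫ x, max (f₂ x - f₁ x) 0 ∂μX' ≤ ∫ y, max (g₁ y - g₂ y) 0 ∂μY := by
    refine dm_layer μX' μY (fun x y => (x, y) ∈ E) hA _ _ (by fun_prop) (by fun_prop)
      (fun _ => le_max_right _ _) (fun _ => le_max_right _ _) fun x y hxy _ => ?_
    exact max_le_max (by linarith [h x y hxy]) le_rfl
  have k2 : ∫ y, max (g₂ y - g₁ y) 0 ∂μY' ≤ ∫ x, max (f₁ x - f₂ x) 0 ∂μX := by
    refine dm_layer μY' μX (fun y x => (x, y) ∈ E) hB _ _ (by fun_prop) (by fun_prop)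
      (fun _ => le_max_right _ _) (fun _ => le_max_right _ _) fun y x hxy _ => ?_
    exact max_le_max (by linarith [h x y hxy]) le_rfl
  have k3 := dm_mono μX' μX hX (fun x => min (f₁ x) (f₂ x)) (by fun_prop)
    (fun x => le_min (hf₁ x) (hf₂ x))
  have k4 := dm_mono μY' μY hY (fun x => min (g₁ x) (g₂ x)) (by fun_prop)
    (fun x => le_min (hg₁ x) (hg₂ x))
  have key : ∀ a b : ℝ, a = min a b + max (a - b) 0 := by
    intro a b
    rcases le_total a b with hab | hab
    · rw [min_eq_left hab, max_eq_right (by linarith)]; ring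
    · rw [min_eq_right hab, max_eq_left (by linarith)]; ring
  have e1 : ∫ x, f₁ x ∂μX = ∫ x, min (f₁ x) (f₂ x) ∂μX + ∫ x, max (f₁ x - f₂ x) 0 ∂μX := by
    rw [← integral_add (dm_integrable _ _ (by fun_prop)) (dm_integrable _ _ (by fun_prop))]
    exact integral_congr_ae (.of_forall fun x => key _ _)
  have e2 : ∫ x, f₂ x ∂μX' = ∫ x, min (f₁ x) (f₂ x) ∂μX' + ∫ x, max (f₂ x - f₁ x) 0 ∂μX' := by
    rw [← integral_add (dm_integrable _ _ (by fun_prop)) (dm_integrable _ _ (by fun_prop))]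
    exact integral_congr_ae (.of_forall fun x => by simpa only [min_comm] using key (f₂ x) (f₁ x))
  have e3 : ∫ x, g₁ x ∂μY = ∫ x, min (g₁ x) (g₂ x) ∂μY + ∫ x, max (g₁ x - g₂ x) 0 ∂μY := by
    rw [← integral_add (dm_integrable _ _ (by fun_prop)) (dm_integrable _ _ (by fun_prop))]
    exact integral_congr_ae (.of_forall fun x => key _ _)
  have e4 : ∫ x, g₂ x ∂μY' = ∫ x, min (g₁ x) (g₂ x) ∂μY' + ∫ x, max (g₂ x - g₁ x) 0 ∂μY' := by
    rw [← integral_add (dm_integrable _ _ (by fun_prop)) (dm_integrable _ _ (by fun_prop))]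
    exact integral_congr_ae (.of_forall fun x => by simpa only [min_comm] using key (g₂ x) (g₁ x))
  linarith

open CompactlySupported in
/-- The functional. -/
lemma dm_functional {X Y : Type*} [MetricSpace X] [CompactSpace X] [MeasurableSpace X] [BorelSpace X]
    [MetricSpace Y] [CompactSpace Y] [MeasurableSpace Y] [BorelSpace Y]
    (μX μX' : Measure X) (μY μY' : Measure Y)
    [IsFiniteMeasure μX] [IsFiniteMeasure μX'] [IsFiniteMeasure μY] [IsFiniteMeasure μY']
    (hX : μX' ≤ μX) (hY : μY' ≤ μY)
    (E : Set (X × Y))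
    (hA : ∀ A : Set X, MeasurableSet A → μX' A ≤ μY {y | ∃ x ∈ A, (x, y) ∈ E})
    (hB : ∀ B : Set Y, MeasurableSet B → μY' B ≤ μX {x | ∃ y ∈ B, (x, y) ∈ E}) :
    ∃ L : C_c(X × Y, ℝ) →ₗ[ℝ] ℝ, ∀ (h : C_c(X × Y, ℝ)) (f₁ f₂ : C(X, ℝ)) (g₁ g₂ : C(Y, ℝ)),
      0 ≤ f₁ → 0 ≤ f₂ → 0 ≤ g₁ → 0 ≤ g₂ →
      (∀ x y, (x, y) ∈ E → h (x, y) ≤ f₁ x - f₂ x + (g₁ y - g₂ y)) →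
      L h ≤ ∫ x, f₁ x ∂μX - ∫ x, f₂ x ∂μX' + (∫ y, g₁ y ∂μY - ∫ y, g₂ y ∂μY') := by
  let s : PointedCone ℝ (C_c(X × Y, ℝ) × ℝ) :=
    { carrier := {p | ∃ (f₁ f₂ : C(X, ℝ)) (g₁ g₂ : C(Y, ℝ)), 0 ≤ f₁ ∧ 0 ≤ f₂ ∧ 0 ≤ g₁ ∧ 0 ≤ g₂ ∧
        (∀ x y, (x, y) ∈ E → p.1 (x, y) ≤ f₁ x - f₂ x + (g₁ y - g₂ y)) ∧
        ∫ x, f₁ x ∂μX - ∫ x, f₂ x ∂μX' + (∫ y, g₁ y ∂μY - ∫ y, g₂ y ∂μY') ≤ p.2}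
      zero_mem' := ⟨0, 0, 0, 0, le_rfl, le_rfl, le_rfl, le_rfl, by simp, by simp⟩
      add_mem' := by
        rintro p q ⟨f₁, f₂, g₁, g₂, a1, a2, a3, a4, a5, a6⟩ ⟨u₁, u₂, v₁, v₂, b1, b2, b3, b4, b5, b6⟩
        refine ⟨f₁ + u₁, f₂ + u₂, g₁ + v₁, g₂ + v₂, add_nonneg a1 b1, add_nonneg a2 b2,
          add_nonneg a3 b3, add_nonneg a4 b4, fun x y hxy => ?_, ?_⟩
        · have := a5 x y hxy
          have := b5 x y hxy
          simp only [Prod.fst_add, CompactlySupportedContinuousMap.add_apply, ContinuousMap.add_apply]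
          linarith
        · simp only [ContinuousMap.add_apply, Prod.snd_add]
          rw [integral_add (dm_integrable _ _ (by fun_prop)) (dm_integrable _ _ (by fun_prop)),
            integral_add (dm_integrable _ _ (by fun_prop)) (dm_integrable _ _ (by fun_prop)),
            integral_add (dm_integrable _ _ (by fun_prop)) (dm_integrable _ _ (by fun_prop)),
            integral_add (dm_integrable _ _ (by fun_prop)) (dm_integrable _ _ (by fun_prop))]
          linarith
      smul_mem' := by
        rintro ⟨c, hc⟩ p ⟨f₁, f₂, g₁, g₂, a1, a2, a3, a4, a5, a6⟩
        refine ⟨c • f₁, c • f₂, c • g₁, c • g₂, smul_nonneg hc a1, smul_nonneg hc a2,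
          smul_nonneg hc a3, smul_nonneg hc a4, fun x y hxy => ?_, ?_⟩
        · have := mul_le_mul_of_nonneg_left (a5 x y hxy) hc
          change c * p.1 (x, y) ≤ c * f₁ x - c * f₂ x + (c * g₁ y - c * g₂ y)
          linarith
        · have := mul_le_mul_of_nonneg_left a6 hc
          simp only [ContinuousMap.smul_apply, smul_eq_mul, integral_const_mul]
          change _ ≤ c * p.2
          linarith }
  let φ : (C_c(X × Y, ℝ) × ℝ) →ₗ.[ℝ] ℝ :=
    ⟨Submodule.prod ⊥ ⊤, (LinearMap.snd ℝ _ _).comp (Submodule.subtype _)⟩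
  obtain ⟨G, hG, hGs⟩ := riesz_extension s φ (by
    rintro ⟨⟨h, r⟩, hp⟩ ⟨f₁, f₂, g₁, g₂, a1, a2, a3, a4, a5, a6⟩
    have h0 : h = 0 := by simpa [φ] using hp
    subst h0
    exact (dm_dual μX μX' μY μY' hX hY E hA hB f₁ f₂ g₁ g₂ a1 a2 a3 a4 a5).trans a6) (by
    rintro ⟨h, r⟩
    obtain ⟨C, hC⟩ : ∃ C, ∀ z, ‖h z‖ ≤ C := by
      obtain ⟨C, hC⟩ := isCompact_univ.exists_bound_of_continuousOn (f := h) h.continuous.continuousOn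
      exact ⟨C, fun z => hC z trivial⟩
    refine ⟨⟨(0, ∫ x, |C| ∂μX - r), by simp [φ]⟩, ?_⟩
    refine ⟨ContinuousMap.const X |C|, 0, 0, 0, fun _ => abs_nonneg C, le_rfl, le_rfl, le_rfl, ?_, ?_⟩
    · intro x y _
      have := (le_abs_self _).trans ((hC (x, y)).trans (le_abs_self C))
      simpa using this
    · simp)
  refine ⟨-(G.comp (LinearMap.inl ℝ _ _)), fun h f₁ f₂ g₁ g₂ a1 a2 a3 a4 a5 => ?_⟩
  set R := ∫ x, f₁ x ∂μX - ∫ x, f₂ x ∂μX' + (∫ y, g₁ y ∂μY - ∫ y, g₂ y ∂μY') with hR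
  have h1 : 0 ≤ G (h, R) := hGs _ ⟨f₁, f₂, g₁, g₂, a1, a2, a3, a4, a5, le_rfl⟩
  have h2 : G (0, R) = R := hG ⟨(0, R), by simp [φ]⟩
  have h3 : G (h, R) = G (h, 0) + G (0, R) := by rw [← map_add]; simp
  simp only [LinearMap.neg_apply, LinearMap.comp_apply, LinearMap.inl_apply]
  linarith

/-- Continuous variant of the Dulmage–Mendelsohn theorem. -/
theorem continuous_dulmage_mendelsohn
    {X Y : Type*} [MetricSpace X] [CompactSpace X] [MeasurableSpace X] [BorelSpace X]
    [MetricSpace Y] [CompactSpace Y] [MeasurableSpace Y] [BorelSpace Y]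
    (μX μX' : Measure X) (μY μY' : Measure Y)
    [IsFiniteMeasure μX] [IsFiniteMeasure μX'] [IsFiniteMeasure μY] [IsFiniteMeasure μY']
    (hX : μX' ≤ μX) (hY : μY' ≤ μY)
    (E : Set (X × Y)) (hE : IsClosed E)
    (hA : ∀ A : Set X, MeasurableSet A → μX' A ≤ μY {y | ∃ x ∈ A, (x, y) ∈ E})
    (hB : ∀ B : Set Y, MeasurableSet B → μY' B ≤ μX {x | ∃ y ∈ B, (x, y) ∈ E}) :
    ∃ (μtX : Measure X) (μtY : Measure Y) (γ : Measure (X × Y)),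
      μX' ≤ μtX ∧ μtX ≤ μX ∧ μY' ≤ μtY ∧ μtY ≤ μY ∧
      γ.map Prod.fst = μtX ∧ γ.map Prod.snd = μtY ∧ γ Eᶜ = 0 := by
  obtain ⟨L, hL⟩ := dm_functional μX μX' μY μY' hX hY E hA hB
  have hpos : ∀ h, 0 ≤ h → 0 ≤ L h := by
    intro h hh
    have := hL (-h) 0 0 0 0 le_rfl le_rfl le_rfl le_rfl (fun x y _ => by simpa using hh (x, y))
    simpa using this
  let γ := RealRMK.rieszMeasure (PositiveLinearMap.mk₀ L hpos)
  have hγ : ∀ k : C(X × Y, ℝ), ∫ z, k z ∂γ =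
      L (CompactlySupportedContinuousMap.continuousMapEquiv k) := fun k =>
    RealRMK.integral_rieszMeasure (PositiveLinearMap.mk₀ L hpos)
      (CompactlySupportedContinuousMap.continuousMapEquiv k)
  have hfst : ∀ f : C(X, ℝ), ∫ x, f x ∂(γ.map Prod.fst) = ∫ z, f z.1 ∂γ := fun f =>
    integral_map measurable_fst.aemeasurable f.continuous.aestronglyMeasurable
  have hsnd : ∀ f : C(Y, ℝ), ∫ x, f x ∂(γ.map Prod.snd) = ∫ z, f z.2 ∂γ := fun f =>
    integral_map measurable_snd.aemeasurable f.continuous.aestronglyMeasurable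
  refine ⟨_, _, γ, ?_, ?_, ?_, ?_, rfl, rfl, ?_⟩
  · refine dm_measure_le _ _ fun f hf => ?_
    have h1 := hγ (-(f.comp ⟨Prod.fst, continuous_fst⟩))
    have h2 := hL (CompactlySupportedContinuousMap.continuousMapEquiv
      (-(f.comp ⟨Prod.fst, continuous_fst⟩))) 0 f 0 0 le_rfl hf le_rfl le_rfl
      (fun x y _ => by simp)
    rw [← h1] at h2
    rw [hfst]
    simp [integral_neg] at h2
    exact h2
  · refine dm_measure_le _ _ fun f hf => ?_
    have h1 := hγ (f.comp ⟨Prod.fst, continuous_fst⟩)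
    have h2 := hL (CompactlySupportedContinuousMap.continuousMapEquiv
      (f.comp ⟨Prod.fst, continuous_fst⟩)) f 0 0 0 hf le_rfl le_rfl le_rfl
      (fun x y _ => by simp)
    rw [← h1] at h2
    rw [hfst]
    simpa using h2
  · refine dm_measure_le _ _ fun f hf => ?_
    have h1 := hγ (-(f.comp ⟨Prod.snd, continuous_snd⟩))
    have h2 := hL (CompactlySupportedContinuousMap.continuousMapEquiv
      (-(f.comp ⟨Prod.snd, continuous_snd⟩))) 0 0 0 f le_rfl le_rfl le_rfl hf
      (fun x y _ => by simp)
    rw [← h1] at h2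
    rw [hsnd]
    simp [integral_neg] at h2
    exact h2
  · refine dm_measure_le _ _ fun f hf => ?_
    have h1 := hγ (f.comp ⟨Prod.snd, continuous_snd⟩)
    have h2 := hL (CompactlySupportedContinuousMap.continuousMapEquiv
      (f.comp ⟨Prod.snd, continuous_snd⟩)) 0 0 f 0 le_rfl le_rfl hf le_rfl
      (fun x y _ => by simp)
    rw [← h1] at h2
    rw [hsnd]
    simpa using h2
  · obtain ⟨k, hk0, hkE, hkc⟩ : ∃ k : C(X × Y, ℝ), (∀ z, 0 ≤ k z) ∧ (∀ z ∈ E, k z = 0) ∧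
        ∀ z ∉ E, k z ≠ 0 := by
      rcases E.eq_empty_or_nonempty with rfl | hne
      · exact ⟨1, fun _ => zero_le_one, by simp, by simp⟩
      · refine ⟨⟨fun z => infDist z E, continuous_infDist_pt E⟩, fun z => infDist_nonneg,
          fun z hz => infDist_zero_of_mem hz, fun z hz => ?_⟩
        exact ((hE.notMem_iff_infDist_pos hne).1 hz).ne'
    have h1 : ∫ z, k z ∂γ ≤ 0 := by
      have h2 := hL (CompactlySupportedContinuousMap.continuousMapEquiv k) 0 0 0 0
        le_rfl le_rfl le_rfl le_rfl (fun x y hxy => by simp [hkE _ hxy])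
      rw [hγ]
      simpa using h2
    have h3 : ∫ z, k z ∂γ = 0 := le_antisymm h1 (integral_nonneg hk0)
    rw [integral_eq_zero_iff_of_nonneg hk0 (dm_integrable _ _ k.continuous)] at h3
    refine measure_mono_null (fun z hz => ?_) h3
    exact hkc z hz
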